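/- arXiv:2508.18832 — 2 statements merged into one kernel-verified Lean document; each statement's English description precedes it below -/
import Mathlib

section
/- For every $b > 0$ and every $\alpha \in [0,1]$, $\frac{2}{b} - \log\big(1 - \alpha + \alpha\,e^{2/b}\big) \;\leq\; \frac{2(1-\alpha)}{b} + \frac{2\alpha^2}{b^2}$. -/
/-!
Jensen's inequality for `exp` at the points `0` and `x = 2 / b`, with weights `1 - α` and `α`,
gives `α x ≤ log (1 - α + α eˣ)`. This already bounds the left-hand side by `2 (1 - α) / b`; the
term `2 α² / b²` is slack introduced by bounding `exp` and `log` one after the other.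
-/

theorem mul_add_mul_le_log_mul_exp_add_mul_exp {p q : ℝ} (hp : 0 ≤ p) (hq : 0 ≤ q)
    (hpq : p + q = 1) (x y : ℝ) :
    p * x + q * y ≤ Real.log (p * Real.exp x + q * Real.exp y) := by
  have jensen : Real.exp (p * x + q * y) ≤ p * Real.exp x + q * Real.exp y :=
    convexOn_exp.2 (Set.mem_univ x) (Set.mem_univ y) hp hq hpq
  exact (Real.le_log_iff_exp_le ((Real.exp_pos _).trans_le jensen)).2 jensen

theorem leakage_bound_simplified_general (x : ℝ) {α : ℝ} (hα0 : 0 ≤ α) (hα1 : α ≤ 1) :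
    x - Real.log (1 - α + α * Real.exp x) ≤ (1 - α) * x := by
  have mul_le_log : α * x ≤ Real.log (1 - α + α * Real.exp x) := by
    simpa using mul_add_mul_le_log_mul_exp_add_mul_exp
      (sub_nonneg.2 hα1) hα0 (sub_add_cancel 1 α) 0 x
  linarith

/-- the tight PML bound is at most the simplified closed-form bound. -/
theorem leakage_bound_simplified (b α : ℝ) (hb : 0 < b) (hα0 : 0 ≤ α) (hα1 : α ≤ 1) :
    2 / b - Real.log (1 - α + α * Real.exp (2 / b)) ≤
      2 * (1 - α) / b + 2 * α ^ 2 / b ^ 2 := by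
  calc 2 / b - Real.log (1 - α + α * Real.exp (2 / b))
      ≤ (1 - α) * (2 / b) := leakage_bound_simplified_general (2 / b) hα0 hα1
    _ = 2 * (1 - α) / b := by ring
    _ ≤ 2 * (1 - α) / b + 2 * α ^ 2 / b ^ 2 := le_add_of_nonneg_right (by positivity)
end

section
/- Let $\mathcal{D}$ be a finite set, $k \geq 2$, and $h_1,\dots,h_k : \mathcal{D} \to \{0,1\}$ with $\sum_{j=1}^k h_j(d) = 1$ for all $d \in \mathcal{D}$. Let $b > 0$ and $\alpha \in (0, 1/k]$. Let $D_1$ be a $\mathcal{D}$-valued random variable with $\Pr(h_1(D_1) = 1) = \alpha$ and $\Pr(h_j(D_1)=1) > 0$ for all $j$, and consider the single-record ($n = 1$) Laplace histogram mechanism with conditional density $q(y^k \mid d) = \prod_{j=1}^k \tfrac{1}{2b}\exp\big(-\tfrac{1}{b}|y_j - h_j(d)|\big)$ and marginal density $q(y^k) = \mathbb{E}\big[q(y^k \mid D_1)\big]$. Then for every $y^k \in \mathbb{R}^k$ with $y_1 \geq 1$ and $y_j \leq 0$ for all $j \in \{2,\dots,k\}$, and every $d \in \mathcal{D}$ with $h_1(d)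 = 1$, $\frac{q(y^k \mid d)}{q(y^k)} \;=\; \frac{\exp(2/b)}{1 - \alpha + \alpha\exp(2/b)}$. In particular the upper bound $\frac{2}{b} - \log\big(1 - \alpha + \alpha e^{2/b}\big)$ on the pointwise maximal leakage is attained. -/
open MeasureTheory

/-!
An outcome `y` with `y₁ ≥ 1` and `y_j ≤ 0` elsewhere lies on a fixed side of every histogram in
every coordinate, so the absolute values in the Laplace density open up. As all histograms have the
same total mass, the conditional density depends on the record only through `h₁(d)`, namely as the
factor `exp ((2 / b) h₁(d))`. Dividing by the marginal density cancels everything else and leaves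
this exponential over the moment generating function of the Bernoulli variable `h₁(D₁)` at `2 / b`.
-/

lemma sum_abs_sub_eq_of_le_of_forall_ne_le {ι : Type*} [Fintype ι] {x y : ι → ℝ} {i : ι}
    (hi : x i ≤ y i) (hne : ∀ j ≠ i, y j ≤ x j) :
    ∑ j, |y j - x j| = ∑ j, x j - ∑ j, y j + 2 * (y i - x i) := by
  classical
  have sum_erase : ∑ j ∈ Finset.univ.erase i, |y j - x j| =
      ∑ j ∈ Finset.univ.erase i, (x j - y j) :=
    Finset.sum_congr rfl fun j hj ↦ by
      rw [abs_of_nonpos (sub_nonpos.2 (hne j (Finset.ne_of_mem_erase hj))), neg_sub]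
  rw [← Finset.sum_sub_distrib, ← Finset.add_sum_erase _ _ (Finset.mem_univ i),
    ← Finset.add_sum_erase _ (fun j ↦ x j - y j) (Finset.mem_univ i), sum_erase,
    abs_of_nonneg (sub_nonneg.2 hi)]
  ring

lemma mgf_eq_of_ae_eq_zero_or_eq_one {Ω : Type*} [MeasurableSpace Ω] {μ : Measure Ω}
    [IsProbabilityMeasure μ] {X : Ω → ℝ} (hX : AEMeasurable X μ)
    (h01 : ∀ᵐ ω ∂μ, X ω = 0 ∨ X ω = 1) (t : ℝ) :
    ProbabilityTheory.mgf X μ t =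
      1 - μ.real {ω | X ω = 1} + μ.real {ω | X ω = 1} * Real.exp t := by
  have hmeas : NullMeasurableSet {ω | X ω = 1} μ :=
    hX.nullMeasurableSet_preimage (measurableSet_singleton 1)
  have exp_eq : (fun ω ↦ Real.exp (t * X ω)) =ᵐ[μ]
      fun ω ↦ 1 + {ω | X ω = 1}.indicator (fun _ ↦ Real.exp t - 1) ω := by
    filter_upwards [h01] with ω hω
    rcases hω with hω | hω <;> simp [hω]
  calc ProbabilityTheory.mgf X μ t
      = ∫ ω, 1 + {ω | X ω = 1}.indicator (fun _ ↦ Real.exp t - 1) ω ∂μ := integral_congr_ae exp_eq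
    _ = 1 + μ.real {ω | X ω = 1} * (Real.exp t - 1) := by
      rw [integral_add (integrable_const _) ((integrable_const _).indicator₀ hmeas),
        integral_indicator₀ hmeas, setIntegral_const, integral_const, probReal_univ, one_smul,
        smul_eq_mul]
    _ = 1 - μ.real {ω | X ω = 1} + μ.real {ω | X ω = 1} * Real.exp t := by ring

/-- The joint density at `y` of independent Laplace variables with common scale `b` and locations
`x j`. With `x j = h j d` it is the conditional density `q(y | d)` of the histogram mechanism. -/
noncomputable def laplaceProductPDF {ι : Type*} [Fintype ι] (b : ℝ) (x y : ι → ℝ) : ℝ :=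
  ∏ j, (1 / (2 * b)) * Real.exp (-(1 / b) * |y j - x j|)

section LaplaceProduct

variable {ι : Type*} [Fintype ι] {b : ℝ} {x y : ι → ℝ} {i : ι}

lemma laplaceProductPDF_ne_zero (hb : b ≠ 0) (x y : ι → ℝ) : laplaceProductPDF b x y ≠ 0 :=
  Finset.prod_ne_zero_iff.2 fun _ _ ↦
    mul_ne_zero (one_div_ne_zero (mul_ne_zero two_ne_zero hb)) (Real.exp_ne_zero _)

lemma laplaceProductPDF_eq_pow_mul_exp (b : ℝ) (x y : ι → ℝ) :
    laplaceProductPDF b x y =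
      (1 / (2 * b)) ^ Fintype.card ι * Real.exp (-(1 / b) * ∑ j, |y j - x j|) := by
  rw [laplaceProductPDF, Finset.prod_mul_distrib, Finset.prod_const, Finset.card_univ,
    ← Real.exp_sum, Finset.mul_sum]

lemma laplaceProductPDF_eq_exp_mul_of_sum_eq {x' : ι → ℝ} (hsum : ∑ j, x' j = ∑ j, x j)
    (hi : x i ≤ y i) (hne : ∀ j ≠ i, y j ≤ x j) (hi' : x' i ≤ y i) (hne' : ∀ j ≠ i, y j ≤ x' j) :
    laplaceProductPDF b x' y = Real.exp (2 / b * (x' i - x i)) * laplaceProductPDF b x y := by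
  rw [laplaceProductPDF_eq_pow_mul_exp, laplaceProductPDF_eq_pow_mul_exp,
    sum_abs_sub_eq_of_le_of_forall_ne_le hi hne, sum_abs_sub_eq_of_le_of_forall_ne_le hi' hne',
    hsum, mul_left_comm, ← Real.exp_add]
  ring_nf

variable {Ω : Type*} [MeasurableSpace Ω] {μ : Measure Ω}

lemma laplaceProductPDF_div_integral_eq_exp_div_mgf {X : Ω → ι → ℝ} (hb : b ≠ 0)
    (hsum : ∀ᵐ ω ∂μ, ∑ j, X ω j = ∑ j, x j) (hi : x i ≤ y i) (hne : ∀ j ≠ i, y j ≤ x j)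
    (hXi : ∀ᵐ ω ∂μ, X ω i ≤ y i) (hXne : ∀ᵐ ω ∂μ, ∀ j ≠ i, y j ≤ X ω j) :
    laplaceProductPDF b x y / ∫ ω, laplaceProductPDF b (X ω) y ∂μ =
      Real.exp (2 / b * x i) / ProbabilityTheory.mgf (fun ω ↦ X ω i) μ (2 / b) := by
  have pdf_eq : (fun ω ↦ laplaceProductPDF b (X ω) y) =ᵐ[μ] fun ω ↦
      laplaceProductPDF b x y / Real.exp (2 / b * x i) * Real.exp (2 / b * X ω i) := by
    filter_upwards [hsum, hXi, hXne] with ω hsumω hXiω hXneω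
    rw [laplaceProductPDF_eq_exp_mul_of_sum_eq hsumω hi hne hXiω hXneω, mul_sub, Real.exp_sub]
    ring
  have integral_eq : ∫ ω, laplaceProductPDF b (X ω) y ∂μ =
      laplaceProductPDF b x y / Real.exp (2 / b * x i) *
        ProbabilityTheory.mgf (fun ω ↦ X ω i) μ (2 / b) := by
    rw [integral_congr_ae pdf_eq, integral_const_mul, ProbabilityTheory.mgf]
  rw [integral_eq, ← div_div, div_div_cancel₀ (laplaceProductPDF_ne_zero hb x y)]

theorem pml_laplace_histogram_tight_general [IsProbabilityMeasure μ] {𝒟 : Type*}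
    {h : ι → 𝒟 → ℝ} (hbin : ∀ j d, h j d = 0 ∨ h j d = 1) (hsum : ∀ d, ∑ j, h j d = 1)
    (hb : b ≠ 0) {D : Ω → 𝒟} (hmeas : AEMeasurable (fun ω ↦ h i (D ω)) μ)
    {α : ℝ} (hα : μ.real {ω | h i (D ω) = 1} = α)
    (hyi : 1 ≤ y i) (hyj : ∀ j ≠ i, y j ≤ 0) {d : 𝒟} (hd : h i d = 1) :
    laplaceProductPDF b (h · d) y / ∫ ω, laplaceProductPDF b (h · (D ω)) y ∂μ =
      Real.exp (2 / b) / (1 - α + α * Real.exp (2 / b)) ∧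
    Real.log (laplaceProductPDF b (h · d) y / ∫ ω, laplaceProductPDF b (h · (D ω)) y ∂μ) =
      2 / b - Real.log (1 - α + α * Real.exp (2 / b)) := by
  have le_outcome (e : 𝒟) : h i e ≤ y i := by rcases hbin i e with he | he <;> linarith
  have outcome_le (e : 𝒟) : ∀ j ≠ i, y j ≤ h j e := fun j hj ↦ by
    rcases hbin j e with he | he <;> linarith [hyj j hj]
  have ratio_eq : laplaceProductPDF b (h · d) y / ∫ ω, laplaceProductPDF b (h · (D ω)) y ∂μ =
      Real.exp (2 / b) / (1 - α + α * Real.exp (2 / b)) := by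
    rw [laplaceProductPDF_div_integral_eq_exp_div_mgf hb
        (.of_forall fun ω ↦ (hsum (D ω)).trans (hsum d).symm) (le_outcome d) (outcome_le d)
        (.of_forall fun ω ↦ le_outcome (D ω)) (.of_forall fun ω ↦ outcome_le (D ω)),
      mgf_eq_of_ae_eq_zero_or_eq_one hmeas (.of_forall fun ω ↦ hbin i (D ω)), hα, hd, mul_one]
  have mixture_pos : 0 < 1 - α + α * Real.exp (2 / b) := by
    have hα0 : 0 ≤ α := hα ▸ measureReal_nonneg
    have hα1 : α ≤ 1 := hα ▸ measureReal_le_one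
    simpa using convex_Ioi (0 : ℝ) one_pos (Real.exp_pos (2 / b)) (sub_nonneg.2 hα1) hα0
      (sub_add_cancel 1 α)
  refine ⟨ratio_eq, ?_⟩
  rw [ratio_eq, Real.log_div (Real.exp_ne_zero _) mixture_pos.ne', Real.log_exp]

end LaplaceProduct

/-- tightness of the PML bound for the single-record (`n = 1`)
Laplace histogram mechanism. If `P(h₁(D₁) = 1) = α` and every class has positive
probability, then for any outcome `y` with `y₁ ≥ 1` and `y_j ≤ 0` for `j ≠ 1`, and
any record `d` in class 1, the density ratio equals `e^(2/b) / (1 - α + α e^(2/b))`,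
so the upper bound `2/b - log (1 - α + α e^(2/b))` on the PML is attained. -/
theorem pml_laplace_histogram_tight {Ω : Type*} [MeasurableSpace Ω]
    (μ : Measure Ω) [IsProbabilityMeasure μ]
    {𝒟 : Type*} [Fintype 𝒟] [MeasurableSpace 𝒟] [MeasurableSingletonClass 𝒟]
    (k : ℕ) (hk : 2 ≤ k) (h : Fin k → 𝒟 → ℝ)
    (hbin : ∀ j d, h j d = 0 ∨ h j d = 1) (hsum : ∀ d, ∑ j, h j d = 1)
    (b α : ℝ) (hb : 0 < b) (hα : 0 < α) (hαk : α ≤ 1 / k)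
    (D1 : Ω → 𝒟) (hmeas : Measurable D1)
    (hα1 : (μ {ω | h ⟨0, by omega⟩ (D1 ω) = 1}).toReal = α)
    (hpos : ∀ j, 0 < (μ {ω | h j (D1 ω) = 1}).toReal)
    (y : Fin k → ℝ) (hy1 : 1 ≤ y ⟨0, by omega⟩)
    (hyj : ∀ j : Fin k, j ≠ ⟨0, by omega⟩ → y j ≤ 0)
    (d : 𝒟) (hd : h ⟨0, by omega⟩ d = 1) :
    (∏ j, (1 / (2 * b)) * Real.exp (-(1 / b) * |y j - h j d|)) /
        (∫ ω, ∏ j, (1 / (2 * b)) * Real.exp (-(1 / b) * |y j - h j (D1 ω)|) ∂μ) =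
      Real.exp (2 / b) / (1 - α + α * Real.exp (2 / b)) ∧
    Real.log ((∏ j, (1 / (2 * b)) * Real.exp (-(1 / b) * |y j - h j d|)) /
        ∫ ω, ∏ j, (1 / (2 * b)) * Real.exp (-(1 / b) * |y j - h j (D1 ω)|) ∂μ) =
      2 / b - Real.log (1 - α + α * Real.exp (2 / b)) :=
  pml_laplace_histogram_tight_general hbin hsum hb.ne'
    ((measurable_of_finite _).comp hmeas).aemeasurable hα1 hy1 hyj hd
end
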